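/- (Siegel's theorem, zero-free region form) For every ε > 0 there exists a constant C(ε) > 0 such that for every integer q > 1 and every primitive quadratic Dirichlet character χ modulo q, the Dirichlet L-function L(s,χ) has no real zero s with s > 1 − C(ε)·q^(−ε); that is, for every real s with 1 − C(ε)·q^(−ε) < s, L(s,χ) ≠ 0. -/

import Mathlib

/-!
Estermann's argument. For real characters `χ₁`, `χ₂` the Dirichlet series of
`f(s) = ζ(s) L(s, χ₁) L(s, χ₂) L(s, χ₁χ₂)` has nonnegative coefficients, so the Taylor coefficients
of `f` at `s = 2` alternate in sign. If `f(β) = 0` with `β` close to `1`, then comparing the Taylor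
polynomial of the entire function `f(s) - r / (s - 1)`, where `r` is the residue of `f` at `1`, with
its value at `β` bounds `1 - β` by a constant times `r (q₁q₂) ^ (8 (1 - β))`. A zero of `L(s, χ₁)`
or `L(s, χ₂)` close to `1` makes the corresponding factor of
`r = L(1, χ₁) L(1, χ₂) L(1, χ₁χ₂)` small. Hence two distinct real characters cannot both have a
zero very close to `1`. Either no real character has a zero in `[1 - δ, 1)`, or any single one that
does repels the zeros of all the others. The second case is what makes the constant ineffective.
-/

namespace Siegel

open Complex DirichletCharacter Filter MeasureTheory Metric Set
open scoped Nat Topology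

section CharacterSums

theorem norm_sum_apply_le_card {F : Type*} [NormedField F] {q : ℕ} (χ : DirichletCharacter F q)
    (s : Finset ℕ) : ‖∑ k ∈ s, χ k‖ ≤ s.card := by
  simpa using norm_sum_le_of_le s fun k _ ↦ χ.norm_le_one (k : ZMod q)

variable {q : ℕ} [NeZero q]

theorem sum_range_natCast {M : Type*} [AddCommMonoid M] (f : ZMod q → M) :
    ∑ k ∈ Finset.range q, f k = ∑ a, f a := by
  obtain ⟨n, rfl⟩ := Nat.exists_eq_succ_of_ne_zero (NeZero.ne q)
  rw [Finset.sum_range]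
  exact Finset.sum_congr rfl fun i _ ↦ congrArg f (Fin.cast_val_eq_self i)

theorem periodic_sum_range_natCast {M : Type*} [AddCommMonoid M] {f : ZMod q → M}
    (hf : ∑ a, f a = 0) : Function.Periodic (fun n : ℕ ↦ ∑ k ∈ Finset.range n, f k) q := by
  intro n
  induction n with
  | zero => simpa only [zero_add, Finset.range_zero, Finset.sum_empty, sum_range_natCast] using hf
  | succ n ih =>
    dsimp only at ih ⊢
    rw [add_right_comm, Finset.sum_range_succ, ih, Finset.sum_range_succ, Nat.cast_add,
      ZMod.natCast_self, add_zero]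

variable {F : Type*} [NormedField F] {χ : DirichletCharacter F q}

theorem norm_sum_Icc_apply_le (hχ : χ ≠ 1) (n : ℕ) : ‖∑ k ∈ Finset.Icc 1 n, χ k‖ ≤ q := by
  have : Nontrivial (ZMod q) := by
    rw [ZMod.nontrivial_iff]
    rintro rfl
    exact hχ (level_one χ)
  have sum_eq : ∑ k ∈ Finset.Icc 1 n, χ k = ∑ k ∈ Finset.range ((n + 1) % q), χ k := by
    rw [(periodic_sum_range_natCast (MulChar.sum_eq_zero_of_ne_one hχ)).map_mod_nat,
      Finset.range_eq_Ico, Finset.sum_eq_sum_Ico_succ_bot n.add_one_pos, Nat.cast_zero,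
      MulChar.map_zero, zero_add, zero_add, Finset.Ico_add_one_right_eq_Icc]
  calc ‖∑ k ∈ Finset.Icc 1 n, χ k‖ ≤ ((n + 1) % q : ℕ) := by
        rw [sum_eq]
        exact (norm_sum_apply_le_card χ _).trans_eq (by rw [Finset.card_range])
    _ ≤ q := mod_cast (Nat.mod_lt _ (NeZero.pos q)).le

theorem norm_sum_Icc_apply_le_rpow (hχ : χ ≠ 1) (n : ℕ) {a : ℝ} (ha₀ : 0 ≤ a) (ha₁ : a ≤ 1) :
    ‖∑ k ∈ Finset.Icc 1 n, χ k‖ ≤ (q : ℝ) ^ a * (n : ℝ) ^ (1 - a) := by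
  set S := ‖∑ k ∈ Finset.Icc 1 n, χ k‖
  have hSq : S ≤ q := norm_sum_Icc_apply_le hχ n
  have hSn : S ≤ n := by simpa using norm_sum_apply_le_card χ (Finset.Icc 1 n)
  have hS₀ : 0 ≤ S := norm_nonneg _
  calc S = S ^ a * S ^ (1 - a) := by
        rw [← Real.rpow_add_of_nonneg hS₀ ha₀ (sub_nonneg.mpr ha₁), add_sub_cancel, Real.rpow_one]
    _ ≤ _ := by have := sub_nonneg.mpr ha₁; gcongr

end CharacterSums

section Mellin

/-- The summatory function `t ↦ ∑_{1 ≤ k ≤ t} a k` of a sequence; the value `a 0` is ignored. -/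
noncomputable def summatory (a : ℕ → ℂ) (t : ℝ) : ℂ := ∑ k ∈ Finset.Icc 1 ⌊t⌋₊, a k

variable {a : ℕ → ℂ}

theorem summatory_of_lt_one {t : ℝ} (ht : t < 1) : summatory a t = 0 := by
  simp [summatory, Nat.floor_eq_zero.mpr ht]

theorem measurable_summatory (a : ℕ → ℂ) : Measurable (summatory a) :=
  (measurable_from_nat (f := fun n ↦ ∑ k ∈ Finset.Icc 1 n, a k)).comp Nat.measurable_floor

theorem mellin_summatory_neg (a : ℕ → ℂ) (s : ℂ) :
    mellin (summatory a) (-s) = ∫ t in Ioi (1 : ℝ), summatory a t * (t : ℂ) ^ (-(s + 1)) := by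
  rw [mellin, setIntegral_eq_of_subset_of_forall_sdiff_eq_zero (s := Ici (1 : ℝ)) measurableSet_Ioi
    (Ici_subset_Ioi.mpr one_pos), integral_Ici_eq_integral_Ioi]
  · refine setIntegral_congr_fun measurableSet_Ioi fun t _ ↦ ?_
    rw [smul_eq_mul, mul_comm, neg_add']
  · rintro t ⟨-, ht⟩
    rw [summatory_of_lt_one (not_le.mp ht), smul_zero]

variable {C : ℝ}

theorem differentiableAt_mellin_summatory (hC : ∀ t, ‖summatory a t‖ ≤ C) {s : ℂ} (hs : s.re < 0) :
    DifferentiableAt ℂ (mellin (summatory a)) s := by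
  refine mellin_differentiableAt_of_isBigO_rpow (a := 0) (b := s.re - 1) ?_ ?_ hs ?_ (sub_one_lt _)
  · refine ((locallyIntegrable_const C).mono (measurable_summatory a).aestronglyMeasurable
      (.of_forall fun t ↦ ?_)).locallyIntegrableOn _
    exact (hC t).trans (le_abs_self C)
  · exact .of_bound C (.of_forall fun t ↦ by simpa using hC t)
  · refine .of_bound 1 ?_
    filter_upwards [mem_nhdsWithin_of_mem_nhds (Iio_mem_nhds one_pos)] with t ht
    simp [summatory_of_lt_one ht]

theorem LSeries_eq_mul_mellin_summatory (hC : ∀ t, ‖summatory a t‖ ≤ C) {s : ℂ} (hs : 0 < s.re)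
    (ha : LSeriesSummable a s) : LSeries a s = s * mellin (summatory a) (-s) := by
  rw [mellin_summatory_neg]
  refine LSeries_eq_mul_integral a le_rfl hs ha (.of_bound C (.of_forall fun n ↦ ?_))
  simpa [summatory] using hC n

end Mellin

section LFunctionBounds

variable {q : ℕ} [NeZero q] {χ : DirichletCharacter ℂ q}

theorem LFunction_eq_mul_mellin_summatory (hχ : χ ≠ 1) {s : ℂ} (hs : 0 < s.re) :
    χ.LFunction s = s * mellin (summatory (χ ·)) (-s) := by
  have hC (t : ℝ) : ‖summatory (χ ·) t‖ ≤ q := norm_sum_Icc_apply_le hχ _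
  have isOpen_re_gt (r : ℝ) : IsOpen {s : ℂ | r < s.re} := isOpen_lt continuous_const continuous_re
  have mellin_analytic :
      AnalyticOnNhd ℂ (fun s ↦ s * mellin (summatory (χ ·)) (-s)) {s | 0 < s.re} := by
    refine DifferentiableOn.analyticOnNhd (fun z hz ↦ ?_) (isOpen_re_gt 0)
    have := differentiableAt_mellin_summatory hC (s := -z) (by simpa using hz)
    exact (differentiableAt_id.mul (this.comp z differentiableAt_id.neg)).differentiableWithinAt
  refine AnalyticOnNhd.eqOn_of_preconnected_of_eventuallyEq (z₀ := 2)
    ((differentiable_LFunction hχ).differentiableOn.analyticOnNhd (isOpen_re_gt 0))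
    mellin_analytic (convex_halfSpace_re_gt 0).isPreconnected (by simp) ?_ hs
  filter_upwards [(isOpen_re_gt 1).mem_nhds (show 1 < (2 : ℂ).re by simp)] with z hz
  rw [LFunction_eq_LSeries χ hz]
  exact LSeries_eq_mul_mellin_summatory hC (one_pos.trans hz) (χ.LSeriesSummable_of_one_lt_re hz)

theorem norm_LFunction_le (hχ : χ ≠ 1) {a : ℝ} (ha₀ : 0 ≤ a) (ha₁ : a ≤ 1) {s : ℂ}
    (hs : 1 < a + s.re) : ‖χ.LFunction s‖ ≤ ‖s‖ * ((q : ℝ) ^ a / (a + s.re - 1)) := by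
  rw [LFunction_eq_mul_mellin_summatory hχ (by linarith), mellin_summatory_neg, norm_mul]
  have integrand_le : ∀ᵐ t ∂volume.restrict (Ioi (1 : ℝ)),
      ‖summatory (χ ·) t * (t : ℂ) ^ (-(s + 1))‖ ≤ (q : ℝ) ^ a * t ^ (-(a + s.re)) := by
    filter_upwards [ae_restrict_mem measurableSet_Ioi] with t (ht : 1 < t)
    have ht₀ : 0 < t := one_pos.trans ht
    have : 0 ≤ 1 - a := sub_nonneg.mpr ha₁
    rw [norm_mul, norm_cpow_eq_rpow_re_of_pos ht₀]
    calc _ ≤ (q : ℝ) ^ a * (⌊t⌋₊ : ℝ) ^ (1 - a) * t ^ (-(s + 1)).re := by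
          gcongr; exact norm_sum_Icc_apply_le_rpow hχ _ ha₀ ha₁
      _ ≤ (q : ℝ) ^ a * t ^ (1 - a) * t ^ (-(s + 1)).re := by
          gcongr; exact Nat.floor_le ht₀.le
      _ = _ := by
          rw [mul_assoc, ← Real.rpow_add ht₀, neg_re, add_re, one_re]
          ring_nf
  gcongr
  calc _ ≤ ∫ t in Ioi (1 : ℝ), (q : ℝ) ^ a * t ^ (-(a + s.re)) :=
        norm_integral_le_of_norm_le
          ((integrableOn_Ioi_rpow_of_lt (by linarith) one_pos).const_mul _) integrand_le
    _ = (q : ℝ) ^ a / (a + s.re - 1) := by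
        rw [integral_const_mul, integral_Ioi_rpow_of_lt (by linarith) one_pos, Real.one_rpow,
          neg_div, ← div_neg, mul_one_div]
        ring_nf

theorem norm_deriv_LFunction_le (hχ : χ ≠ 1) {δ : ℝ} (hδ₀ : 0 < δ) (hδ : δ ≤ 1 / 4) {z : ℂ}
    (hz : 1 - δ ≤ z.re) (hz₁ : ‖z‖ ≤ 1) : ‖deriv χ.LFunction z‖ ≤ (q : ℝ) ^ (4 * δ) / δ ^ 2 := by
  rw [pow_two, ← div_div]
  refine norm_deriv_le_of_forall_mem_sphere_norm_le hδ₀ (differentiable_LFunction hχ).diffContOnCl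
    fun s hs ↦ ?_
  rw [mem_sphere_iff_norm] at hs
  have hre : 1 - 2 * δ ≤ s.re := by
    have := (abs_le.mp ((abs_re_le_norm (s - z)).trans hs.le)).1
    rw [sub_re] at this
    linarith
  have hnorm : ‖s‖ ≤ 2 := by linarith [norm_le_norm_sub_add s z]
  have hpos : 0 < 4 * δ + s.re - 1 := by linarith
  calc ‖χ.LFunction s‖ ≤ ‖s‖ * ((q : ℝ) ^ (4 * δ) / (4 * δ + s.re - 1)) :=
        norm_LFunction_le hχ (by positivity) (by linarith) (by linarith)
    _ ≤ 2 * ((q : ℝ) ^ (4 * δ) / (2 * δ)) := by gcongr; linarith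
    _ = (q : ℝ) ^ (4 * δ) / δ := by field_simp

theorem norm_LFunction_one_le_of_zero (hχ : χ ≠ 1) {δ : ℝ} (hδ₀ : 0 < δ) (hδ : δ ≤ 1 / 4) {β : ℝ}
    (hβ : 1 - δ ≤ β) (hβ₁ : β < 1) (hzero : χ.LFunction β = 0) :
    ‖χ.LFunction 1‖ ≤ (q : ℝ) ^ (4 * δ) / δ ^ 2 * (1 - β) := by
  have hconvex : Convex ℝ ({z : ℂ | 1 - δ ≤ z.re} ∩ closedBall 0 1) :=
    (convex_halfSpace_re_ge _).inter (convex_closedBall _ _)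
  have mvt := hconvex.norm_image_sub_le_of_norm_deriv_le (x := (β : ℂ)) (y := 1)
    (fun z _ ↦ differentiable_LFunction hχ z)
    (fun z hz ↦ norm_deriv_LFunction_le hχ hδ₀ hδ hz.1 (mem_closedBall_zero_iff.mp hz.2))
    ⟨by simpa using hβ, by simpa using abs_le.mpr ⟨by linarith, hβ₁.le⟩⟩
    ⟨by simpa using hδ₀.le, by simp⟩
  have norm_one_sub : ‖(1 : ℂ) - β‖ = 1 - β := by
    rw [← ofReal_one, ← ofReal_sub, norm_real, Real.norm_of_nonneg (by linarith)]
  rwa [hzero, sub_zero, norm_one_sub] at mvt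

end LFunctionBounds

section Coefficients

open ArithmeticFunction
open scoped ComplexOrder

/-- The derivation `f ↦ log · f` of the ring of arithmetic functions, which corresponds to the
derivation `-d/ds` of Dirichlet series. -/
noncomputable def logMul (f : ArithmeticFunction ℂ) : ArithmeticFunction ℂ :=
  ⟨fun n ↦ Real.log n * f n, by simp⟩

theorem logMul_apply (f : ArithmeticFunction ℂ) (n : ℕ) : logMul f n = Real.log n * f n := rfl

theorem logMul_mul (f g : ArithmeticFunction ℂ) :
    logMul (f * g) = logMul f * g + f * logMul g := by
  ext n
  simp only [logMul_apply, mul_apply, ArithmeticFunction.add_apply, Finset.mul_sum,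
    ← Finset.sum_add_distrib]
  refine Finset.sum_congr rfl fun p hp ↦ ?_
  obtain ⟨hp₁, hp₂⟩ := Nat.ne_zero_of_mem_divisorsAntidiagonal hp
  rw [← (Nat.mem_divisorsAntidiagonal.mp hp).1, Nat.cast_mul,
    Real.log_mul (mod_cast hp₁) (mod_cast hp₂), ofReal_add]
  ring

theorem logMul_mul_eq_mul_add {f g K K' : ArithmeticFunction ℂ} (hf : logMul f = f * K)
    (hg : logMul g = g * K') : logMul (f * g) = f * g * (K + K') := by
  rw [logMul_mul, hf, hg]
  ring

theorem nonneg_of_logMul_eq_mul {f K : ArithmeticFunction ℂ} (h : logMul f = f * K)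
    (hK : ∀ n, 0 ≤ K n) (hK₁ : K 1 = 0) (hf₁ : 0 ≤ f 1) (n : ℕ) : 0 ≤ f n := by
  induction n using Nat.strong_induction_on with
  | _ n ih =>
  obtain rfl | rfl | hn : n = 0 ∨ n = 1 ∨ 1 < n := by lia
  · simp
  · exact hf₁
  have log_mul_nonneg : 0 ≤ Real.log n * f n := by
    rw [← logMul_apply, h, mul_apply]
    refine Finset.sum_nonneg fun p hp ↦ ?_
    obtain ⟨rfl, -⟩ := Nat.mem_divisorsAntidiagonal.mp hp
    rcases eq_or_ne p.2 1 with hp₂ | hp₂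
    · simp [hp₂, hK₁]
    · have hp₁ : p.1 ≠ 0 := by rintro hp₁; simp [hp₁] at hn
      have hp₂' : p.2 ≠ 0 := by rintro hp₂'; simp [hp₂'] at hn
      exact mul_nonneg (ih _ (lt_mul_of_one_lt_right (by lia) (by lia))) (hK _)
  have hlog : (0 : ℂ) < Real.log n := mod_cast Real.log_pos (mod_cast hn)
  rw [← inv_mul_cancel_left₀ hlog.ne' (f n)]
  exact mul_nonneg (inv_nonneg.mpr hlog.le) log_mul_nonneg

variable {q : ℕ}

/-- A Dirichlet character as an arithmetic function. -/
noncomputable def charFun (χ : DirichletCharacter ℂ q) : ArithmeticFunction ℂ :=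
  toArithmeticFunction (χ ·)

/-- The twist `n ↦ χ n * Λ n` of the von Mangoldt function. -/
noncomputable def twistedVonMangoldt (χ : DirichletCharacter ℂ q) : ArithmeticFunction ℂ :=
  toArithmeticFunction fun n ↦ χ n * (vonMangoldt n : ℂ)

theorem twistedVonMangoldt_apply (χ : DirichletCharacter ℂ q) (n : ℕ) :
    twistedVonMangoldt χ n = χ n * (vonMangoldt n : ℂ) := by
  rcases eq_or_ne n 0 with rfl | hn <;> simp [twistedVonMangoldt, toArithmeticFunction, *]

theorem charFun_apply (χ : DirichletCharacter ℂ q) {n : ℕ} (hn : n ≠ 0) : charFun χ n = χ n := by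
  simp [charFun, toArithmeticFunction, hn]

theorem logMul_charFun (χ : DirichletCharacter ℂ q) :
    logMul (charFun χ) = charFun χ * twistedVonMangoldt χ := by
  ext n
  rcases eq_or_ne n 0 with rfl | hn
  · simp
  have := congrFun χ.convolution_twist_vonMangoldt n
  rw [mul_comm (charFun χ), logMul_apply, charFun_apply χ hn, mul_comm (_ : ℂ), natCast_log]
  exact this.symm

theorem LSeriesHasSum_charFun [NeZero q] (χ : DirichletCharacter ℂ q) {s : ℂ} (hs : 1 < s.re) :
    LSeriesHasSum (charFun χ) s (χ.LFunction s) := by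
  rw [LSeriesHasSum_congr s _ (charFun_apply χ), LFunction_eq_LSeries χ hs]
  exact (χ.LSeriesSummable_of_one_lt_re hs).LSeriesHasSum

theorem changeLevel_apply_natCast {R : Type*} [CommMonoidWithZero R] {m : ℕ}
    (χ : DirichletCharacter R q) (hm : q ∣ m) {n : ℕ} (hn : n.Coprime m) :
    changeLevel hm χ n = χ n := by
  simpa using changeLevel_eq_cast_of_dvd' χ hm (Nat.isCoprime_iff_coprime.mpr hn)

theorem mul_apply_natCast {R : Type*} [CommMonoidWithZero R] {q' : ℕ}
    (χ : DirichletCharacter R q) (χ' : DirichletCharacter R q') (n : ℕ) :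
    χ.mul χ' n = χ n * χ' n := by
  by_cases hn : n.Coprime (q.lcm q')
  · rw [DirichletCharacter.mul, MulChar.mul_apply, changeLevel_apply_natCast _ _ hn,
      changeLevel_apply_natCast _ _ hn]
  · rw [MulChar.map_nonunit _ (by rwa [ZMod.isUnit_iff_coprime])]
    have : ¬ (n.Coprime q ∧ n.Coprime q') := fun h ↦ hn ((h.1.mul_right h.2).coprime_dvd_right
      (Nat.lcm_dvd_mul q q'))
    rcases not_and_or.mp this with h | h
    · rw [MulChar.map_nonunit χ (by rwa [ZMod.isUnit_iff_coprime]), zero_mul]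
    · rw [MulChar.map_nonunit χ' (by rwa [ZMod.isUnit_iff_coprime]), mul_zero]

theorem one_add_apply_nonneg {χ : DirichletCharacter ℂ q} (hχ : χ ^ 2 = 1) (a : ZMod q) :
    0 ≤ 1 + χ a := by
  rcases MulChar.isQuadratic_iff_sq_eq_one.mpr hχ a with h | h | h <;> simp [h, one_add_one_eq_two]

variable {q₁ q₂ : ℕ} (χ₁ : DirichletCharacter ℂ q₁) (χ₂ : DirichletCharacter ℂ q₂)

/-- The coefficients of the Dirichlet series of `ζ(s) L(s, χ₁) L(s, χ₂) L(s, χ₁χ₂)`. The zeta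
function enters as the L-function of the character of modulus `1`. -/
noncomputable def siegelCoeff : ArithmeticFunction ℂ :=
  charFun (1 : DirichletCharacter ℂ 1) * charFun χ₁ * charFun χ₂ * charFun (χ₁.mul χ₂)

theorem siegelCoeff_one : siegelCoeff χ₁ χ₂ 1 = 1 := by
  have h {q : ℕ} (χ : DirichletCharacter ℂ q) : charFun χ 1 = 1 := by
    rw [charFun_apply χ one_ne_zero, Nat.cast_one, map_one]
  simp [siegelCoeff, h]

variable {χ₁ χ₂}

theorem siegelCoeff_nonneg (h₁ : χ₁ ^ 2 = 1) (h₂ : χ₂ ^ 2 = 1) (n : ℕ) :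
    0 ≤ siegelCoeff χ₁ χ₂ n := by
  -- The logarithmic derivative has the nonnegative coefficients `(1 + χ₁ n) (1 + χ₂ n) Λ n`.
  have hlog := logMul_mul_eq_mul_add (logMul_mul_eq_mul_add (logMul_mul_eq_mul_add
    (logMul_charFun (1 : DirichletCharacter ℂ 1)) (logMul_charFun χ₁)) (logMul_charFun χ₂))
    (logMul_charFun (χ₁.mul χ₂))
  refine nonneg_of_logMul_eq_mul hlog (fun k ↦ ?_) ?_ ?_ n
  · have factor : (1 : ℂ) * (vonMangoldt k : ℂ) + χ₁ k * (vonMangoldt k : ℂ)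
        + χ₂ k * (vonMangoldt k : ℂ) + χ₁ k * χ₂ k * (vonMangoldt k : ℂ)
        = (1 + χ₁ k) * (1 + χ₂ k) * (vonMangoldt k : ℂ) := by ring
    simp only [ArithmeticFunction.add_apply, twistedVonMangoldt_apply, mul_apply_natCast,
      MulChar.one_apply (isUnit_of_subsingleton (k : ZMod 1)), factor]
    exact mul_nonneg (mul_nonneg (one_add_apply_nonneg h₁ k) (one_add_apply_nonneg h₂ k))
      (mod_cast vonMangoldt_nonneg)
  · simp [twistedVonMangoldt_apply]
  · exact zero_le_one.trans_eq (siegelCoeff_one χ₁ χ₂).symm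

instance neZero_lcm [NeZero q₁] [NeZero q₂] : NeZero (q₁.lcm q₂) :=
  ⟨Nat.lcm_ne_zero (NeZero.ne q₁) (NeZero.ne q₂)⟩

theorem LSeriesHasSum_siegelCoeff [NeZero q₁] [NeZero q₂] {s : ℂ} (hs : 1 < s.re) :
    LSeriesHasSum (siegelCoeff χ₁ χ₂) s ((1 : DirichletCharacter ℂ 1).LFunction s *
      χ₁.LFunction s * χ₂.LFunction s * (χ₁.mul χ₂).LFunction s) :=
  LSeriesHasSum_mul (LSeriesHasSum_mul (LSeriesHasSum_mul (LSeriesHasSum_charFun 1 hs)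
    (LSeriesHasSum_charFun χ₁ hs)) (LSeriesHasSum_charFun χ₂ hs))
    (LSeriesHasSum_charFun (χ₁.mul χ₂) hs)

theorem one_le_re_LSeries_of_nonneg {a : ℕ → ℂ} (ha : ∀ n, 0 ≤ a n) (ha₁ : a 1 = 1) {x : ℝ}
    (hx : LSeriesSummable a x) : 1 ≤ (LSeries a x).re := by
  have hnonneg (n : ℕ) : 0 ≤ (LSeries.term a x n).re :=
    (Complex.nonneg_iff.mp (LSeries.term_nonneg (ha n) x)).1
  rw [LSeries, Complex.re_tsum hx]
  refine le_of_eq_of_le ?_ ((Complex.hasSum_re hx.hasSum).summable.le_tsum 1 fun n _ ↦ hnonneg n)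
  simp [LSeries.term, ha₁]

end Coefficients

section Estermann

theorem norm_sum_taylor_sub_le {E : Type*} [NormedAddCommGroup E] [NormedSpace ℂ E]
    [CompleteSpace E] {f : ℂ → E} {c z : ℂ} {R B : ℝ} (hf : DiffContOnCl ℂ f (ball c R))
    (hB : ∀ w ∈ sphere c R, ‖f w‖ ≤ B) (hz : z ∈ ball c R) (M : ℕ) :
    ‖∑ m ∈ Finset.range M, (m ! : ℂ)⁻¹ • (z - c) ^ m • iteratedDeriv m f c - f z‖ ≤
      B * (dist z c / R) ^ M / (1 - dist z c / R) := by
  have hR : 0 < R := dist_nonneg.trans_lt hz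
  refine norm_sub_le_of_geometric_bound_of_hasSum ((div_lt_one hR).mpr hz) (fun m ↦ ?_)
    (hasSum_taylorSeries_on_ball hf.differentiableOn hz) M
  rw [norm_smul, norm_smul, norm_inv, norm_natCast, norm_pow, ← dist_eq, div_pow]
  calc (m ! : ℝ)⁻¹ * (dist z c ^ m * ‖iteratedDeriv m f c‖)
      ≤ (m ! : ℝ)⁻¹ * (dist z c ^ m * (m ! * B / R ^ m)) := by
        gcongr
        exact norm_iteratedDeriv_le_of_forall_mem_sphere_norm_le m hR hf hB
    _ = B * (dist z c ^ m / R ^ m) := by field_simp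

theorem iteratedDeriv_dslope {𝕜 : Type*} [NontriviallyNormedField 𝕜] {f : 𝕜 → 𝕜} {c z : 𝕜} {m : ℕ}
    (hf : ContDiffAt 𝕜 m f z) (hz : z ≠ c) :
    iteratedDeriv m (dslope f c) z = iteratedDeriv m (fun s ↦ f s / (s - c)) z -
      f c * ((-1) ^ m * m ! * (z - c) ^ (-1 - m : ℤ)) := by
  have hsub : ContDiffAt 𝕜 m (fun s ↦ s - c) z := contDiffAt_id.sub contDiffAt_const
  have hzc : z - c ≠ 0 := sub_ne_zero.mpr hz
  have dslope_eq : dslope f c =ᶠ[𝓝 z] fun s ↦ f s / (s - c) - f c * (s - c)⁻¹ := by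
    filter_upwards [isOpen_ne.mem_nhds hz] with s hs
    rw [dslope_of_ne _ hs, slope_def_field, sub_div, div_eq_mul_inv (f c)]
  have inv_eq : iteratedDeriv m (fun s ↦ (s - c)⁻¹) z =
      (-1) ^ m * m ! * (z - c) ^ (-1 - m : ℤ) := by
    rw [iteratedDeriv_comp_sub_const m (fun s ↦ s⁻¹), iteratedDeriv_eq_iterate]
    exact iter_deriv_inv m (z - c)
  rw [dslope_eq.iteratedDeriv_eq, iteratedDeriv_fun_sub (f := fun s ↦ f s / (s - c))
    (g := fun s ↦ f c * (s - c)⁻¹) (hf.div hsub hzc) (contDiffAt_const.mul (hsub.inv hzc)),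
    iteratedDeriv_const_mul_field, inv_eq]

variable {P : ℂ → ℂ}

theorem taylor_term_dslope (hP : Differentiable ℂ P) (z : ℂ) (m : ℕ) :
    (m ! : ℂ)⁻¹ • (z - 2) ^ m • iteratedDeriv m (dslope P 1) 2 = (2 - z) ^ m *
      ((m ! : ℂ)⁻¹ * ((-1) ^ m * iteratedDeriv m (fun s ↦ P s / (s - 1)) 2) - P 1) := by
  have two_sub_one : (2 : ℂ) - 1 = 1 := by norm_num
  have neg_one_sq : ((-1 : ℂ) ^ m) * (-1) ^ m = 1 := by rw [← mul_pow]; simp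
  have inv_mul : (m ! : ℂ)⁻¹ * m ! = 1 := inv_mul_cancel₀ (mod_cast m.factorial_ne_zero)
  rw [iteratedDeriv_dslope hP.contDiff.contDiffAt (by simp), two_sub_one, one_zpow, mul_one,
    ← neg_sub 2 z, neg_pow, smul_eq_mul, smul_eq_mul]
  linear_combination -(P 1 * (2 - z) ^ m) * ((-1) ^ m * (-1) ^ m * inv_mul + neg_one_sq)

theorem one_sub_le_re_sum {b : ℕ → ℂ} (hb : ∀ m, 0 ≤ (b m).re) (hb₀ : 1 ≤ (b 0).re) (p : ℂ)
    {x : ℝ} (hx : 0 ≤ x) {M : ℕ} (hM : 0 < M) :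
    1 - ‖p‖ * ∑ m ∈ Finset.range M, x ^ m ≤
      (∑ m ∈ Finset.range M, (x : ℂ) ^ m * (b m - p)).re := by
  have re_sum : (∑ m ∈ Finset.range M, (x : ℂ) ^ m * (b m - p)).re =
      ∑ m ∈ Finset.range M, x ^ m * (b m).re - p.re * ∑ m ∈ Finset.range M, x ^ m := by
    rw [Complex.re_sum, Finset.mul_sum, ← Finset.sum_sub_distrib]
    refine Finset.sum_congr rfl fun m _ ↦ ?_
    rw [← ofReal_pow, re_ofReal_mul, sub_re, mul_sub, mul_comm p.re]
  rw [re_sum]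
  gcongr
  · calc (1 : ℝ) ≤ x ^ 0 * (b 0).re := by simpa using hb₀
      _ ≤ ∑ m ∈ Finset.range M, x ^ m * (b m).re :=
        Finset.single_le_sum (f := fun m ↦ x ^ m * (b m).re)
          (fun m _ ↦ mul_nonneg (pow_nonneg hx m) (hb m)) (Finset.mem_range.mpr hM)
  · exact re_le_norm p

theorem norm_taylor_dslope_sub_le (hP : Differentiable ℂ P) {B : ℝ}
    (hB : ∀ s ∈ sphere (2 : ℂ) (3 / 2), ‖dslope P 1 s‖ ≤ B) {β : ℝ} (hβ : 7 / 8 ≤ β) (hβ₁ : β < 1)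
    (M : ℕ) :
    ‖∑ m ∈ Finset.range M, ((2 - β : ℝ) : ℂ) ^ m * ((m ! : ℂ)⁻¹ *
      ((-1) ^ m * iteratedDeriv m (fun s ↦ P s / (s - 1)) 2) - P 1) - dslope P 1 β‖ ≤
        4 * B * (3 / 4) ^ M := by
  have hB₀ : 0 ≤ B := (norm_nonneg _).trans (hB (2 + 3 / 2) (by simp))
  have dist_eq : dist (β : ℂ) 2 = 2 - β := by
    rw [dist_eq_norm, ← ofReal_ofNat, ← ofReal_sub, norm_real, Real.norm_of_nonpos (by linarith),
      neg_sub]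
  have hdslope : Differentiable ℂ (dslope P 1) :=
    differentiableOn_univ.mp ((differentiableOn_dslope univ_mem).mpr hP.differentiableOn)
  have taylor := norm_sum_taylor_sub_le hdslope.diffContOnCl hB
    (by rw [mem_ball, dist_eq]; linarith) M
  simp only [taylor_term_dslope hP, dist_eq] at taylor
  have ratio_nonneg : 0 ≤ (2 - β) / (3 / 2) := div_nonneg (by linarith) (by norm_num)
  have ratio_le : (2 - β) / (3 / 2) ≤ 3 / 4 := by linarith
  rw [ofReal_sub, ofReal_ofNat]
  calc _ ≤ B * ((2 - β) / (3 / 2)) ^ M / (1 - (2 - β) / (3 / 2)) := taylor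
    _ ≤ B * (3 / 4) ^ M / (1 - 3 / 4) := by
        gcongr
    _ = 4 * B * (3 / 4) ^ M := by ring

/-- At `β` the Taylor polynomial of `P s / (s - 1)` about `2` is at least its constant term, by
positivity, while that of the pole `P 1 / (s - 1)` is a geometric sum. -/
theorem one_sub_le_mul_pow_of_zero (hP : Differentiable ℂ P) {B : ℝ}
    (hB : ∀ s ∈ sphere (2 : ℂ) (3 / 2), ‖dslope P 1 s‖ ≤ B)
    (hpos : ∀ m, 0 ≤ ((-1) ^ m * iteratedDeriv m (fun s ↦ P s / (s - 1)) 2).re)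
    (hP₂ : 1 ≤ (P 2).re) {β : ℝ} (hβ : 7 / 8 ≤ β) (hβ₁ : β < 1) (hzero : P β = 0) {M : ℕ}
    (hM₀ : 0 < M) (hM : 8 * B * (3 / 4) ^ M ≤ 1) :
    1 - β ≤ 2 * ‖P 1‖ * (2 - β) ^ M := by
  set b : ℕ → ℂ := fun m ↦ (m ! : ℂ)⁻¹ * ((-1) ^ m * iteratedDeriv m (fun s ↦ P s / (s - 1)) 2)
  have hb (m : ℕ) : 0 ≤ (b m).re := by
    change 0 ≤ ((m ! : ℂ)⁻¹ * _).re
    rw [← ofReal_natCast, ← ofReal_inv, re_ofReal_mul]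
    exact mul_nonneg (by positivity) (hpos m)
  have hb₀ : 1 ≤ (b 0).re := by
    have two_sub_one : (2 : ℂ) - 1 = 1 := by norm_num
    simpa [b, two_sub_one] using hP₂
  have norm_sub_one : ‖(β : ℂ) - 1‖ = 1 - β := by
    rw [← ofReal_one, ← ofReal_sub, norm_real, Real.norm_of_nonpos (by linarith), neg_sub]
  have norm_dslope : ‖dslope P 1 β‖ = ‖P 1‖ / (1 - β) := by
    rw [dslope_of_ne _ (mod_cast hβ₁.ne), slope_def_field, hzero, zero_sub, norm_div, norm_neg,
      norm_sub_one]
  have taylor := norm_taylor_dslope_sub_le hP hB hβ hβ₁ M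
  have upper := (re_le_norm _).trans ((norm_le_norm_sub_add _ (dslope P 1 β)).trans
    (add_le_add taylor norm_dslope.le))
  have lower := one_sub_le_re_sum hb hb₀ (P 1) (x := 2 - β) (by linarith) hM₀
  rw [geom_sum_eq (by linarith), show 2 - β - 1 = 1 - β by ring] at lower
  have h1β : 0 < 1 - β := sub_pos.mpr hβ₁
  have half_le : 1 / 2 ≤ ‖P 1‖ * (2 - β) ^ M / (1 - β) := by
    have : ‖P 1‖ * (2 - β) ^ M / (1 - β) =
        ‖P 1‖ * (((2 - β) ^ M - 1) / (1 - β)) + ‖P 1‖ / (1 - β) := by ring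
    linarith
  rw [le_div_iff₀ h1β] at half_le
  linarith

theorem exists_pow_le_and_one_add_pow_le {B : ℝ} (hB : 1 ≤ B) :
    ∃ M : ℕ, 0 < M ∧ B * (3 / 4) ^ M ≤ 1 ∧
      ∀ u : ℝ, 0 ≤ u → (1 + u) ^ M ≤ Real.exp u * B ^ (4 * u) := by
  have hB₀ : 0 < B := one_pos.trans_le hB
  have hlog : 0 ≤ Real.log B := Real.log_nonneg hB
  refine ⟨⌊4 * Real.log B⌋₊ + 1, Nat.succ_pos _, ?_, fun u hu ↦ ?_⟩
  · have hM : 4 * Real.log B ≤ (⌊4 * Real.log B⌋₊ + 1 : ℕ) := by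
      rw [Nat.cast_succ]; exact (Nat.lt_floor_add_one _).le
    calc B * (3 / 4) ^ (⌊4 * Real.log B⌋₊ + 1)
        ≤ B * Real.exp (-(1 / 4)) ^ (⌊4 * Real.log B⌋₊ + 1) := by
          gcongr
          linarith [Real.add_one_le_exp (-(1 / 4))]
      _ ≤ B * Real.exp (-Real.log B) := by
          rw [← Real.exp_nat_mul]
          gcongr
          linarith
      _ = 1 := by rw [Real.exp_neg, Real.exp_log hB₀, mul_inv_cancel₀ hB₀.ne']
  · have hM : ((⌊4 * Real.log B⌋₊ + 1 : ℕ) : ℝ) ≤ 4 * Real.log B + 1 := by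
      rw [Nat.cast_succ]
      gcongr
      exact Nat.floor_le (by positivity)
    calc (1 + u) ^ (⌊4 * Real.log B⌋₊ + 1)
        ≤ Real.exp u ^ (⌊4 * Real.log B⌋₊ + 1) := by
          gcongr
          linarith [Real.add_one_le_exp u]
      _ ≤ Real.exp ((4 * Real.log B + 1) * u) := by
          rw [← Real.exp_nat_mul]
          gcongr
      _ = Real.exp u * B ^ (4 * u) := by
          rw [Real.rpow_def_of_pos hB₀, ← Real.exp_add]
          ring_nf

theorem one_sub_le_mul_rpow_of_zero (hP : Differentiable ℂ P) {B : ℝ} (hB₁ : 1 ≤ 8 * B)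
    (hB : ∀ s ∈ sphere (2 : ℂ) (3 / 2), ‖dslope P 1 s‖ ≤ B)
    (hpos : ∀ m, 0 ≤ ((-1) ^ m * iteratedDeriv m (fun s ↦ P s / (s - 1)) 2).re)
    (hP₂ : 1 ≤ (P 2).re) {β : ℝ} (hβ : 7 / 8 ≤ β) (hβ₁ : β < 1) (hzero : P β = 0) :
    1 - β ≤ 2 * Real.exp 1 * ‖P 1‖ * (8 * B) ^ (4 * (1 - β)) := by
  obtain ⟨M, hM₀, hM, pow_le⟩ := exists_pow_le_and_one_add_pow_le hB₁
  calc 1 - β ≤ 2 * ‖P 1‖ * (2 - β) ^ M :=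
        one_sub_le_mul_pow_of_zero hP hB hpos hP₂ hβ hβ₁ hzero hM₀ hM
    _ = 2 * ‖P 1‖ * (1 + (1 - β)) ^ M := by ring
    _ ≤ 2 * ‖P 1‖ * (Real.exp (1 - β) * (8 * B) ^ (4 * (1 - β))) := by
        gcongr
        exact pow_le (1 - β) (by linarith)
    _ ≤ 2 * ‖P 1‖ * (Real.exp 1 * (8 * B) ^ (4 * (1 - β))) := by
        gcongr
        linarith
    _ = _ := by ring

end Estermann

section SiegelProduct

variable {q₁ q₂ : ℕ} [NeZero q₁] [NeZero q₂] {χ₁ : DirichletCharacter ℂ q₁}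
  {χ₂ : DirichletCharacter ℂ q₂}

/-- The function `(s - 1) ζ(s) L(s, χ₁) L(s, χ₂) L(s, χ₁χ₂)`, with its removable singularity at
`s = 1` removed. -/
noncomputable def siegelProduct (χ₁ : DirichletCharacter ℂ q₁) (χ₂ : DirichletCharacter ℂ q₂)
    (s : ℂ) : ℂ :=
  LFunctionTrivChar₁ 1 s * χ₁.LFunction s * χ₂.LFunction s * (χ₁.mul χ₂).LFunction s

theorem differentiable_siegelProduct (h₁ : χ₁ ≠ 1) (h₂ : χ₂ ≠ 1) (h : χ₁.mul χ₂ ≠ 1) :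
    Differentiable ℂ (siegelProduct χ₁ χ₂) :=
  (((differentiable_LFunctionTrivChar₁ 1).mul (differentiable_LFunction h₁)).mul
    (differentiable_LFunction h₂)).mul (differentiable_LFunction h)

theorem siegelProduct_one : siegelProduct χ₁ χ₂ 1 =
    χ₁.LFunction 1 * χ₂.LFunction 1 * (χ₁.mul χ₂).LFunction 1 := by
  simp [siegelProduct, LFunctionTrivChar₁]

theorem siegelProduct_div_sub_one {s : ℂ} (hs : 1 < s.re) :
    siegelProduct χ₁ χ₂ s / (s - 1) = LSeries (siegelCoeff χ₁ χ₂) s := by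
  have hs₁ : s ≠ 1 := by rintro rfl; simp at hs
  rw [(LSeriesHasSum_siegelCoeff hs).LSeries_eq, siegelProduct, LFunctionTrivChar₁,
    Function.update_of_ne hs₁, LFunctionTrivChar]
  field_simp [sub_ne_zero.mpr hs₁]

theorem iteratedDeriv_siegelProduct_alternating (h₁ : χ₁ ^ 2 = 1) (h₂ : χ₂ ^ 2 = 1) (m : ℕ) :
    0 ≤ ((-1) ^ m * iteratedDeriv m (fun s ↦ siegelProduct χ₁ χ₂ s / (s - 1)) 2).re := by
  have eq_LSeries : (fun s ↦ siegelProduct χ₁ χ₂ s / (s - 1)) =ᶠ[𝓝 2]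
      LSeries (siegelCoeff χ₁ χ₂) := by
    filter_upwards [(isOpen_lt continuous_const continuous_re).mem_nhds
      (show 1 < (2 : ℂ).re by simp)] with s hs using siegelProduct_div_sub_one hs
  have abscissa_lt : LSeries.abscissaOfAbsConv (siegelCoeff χ₁ χ₂) < (2 : ℝ) := by
    have : LSeriesSummable (siegelCoeff χ₁ χ₂) (3 / 2 : ℝ) :=
      (LSeriesHasSum_siegelCoeff (by norm_num)).LSeriesSummable
    refine this.abscissaOfAbsConv_le.trans_lt ?_
    rw [ofReal_re]
    exact_mod_cast (by norm_num : (3 / 2 : ℝ) < 2)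
  rw [eq_LSeries.iteratedDeriv_eq]
  exact (Complex.nonneg_iff.mp (LSeries.iteratedDeriv_alternating (siegelCoeff_nonneg h₁ h₂)
    abscissa_lt m)).1

theorem one_le_re_siegelProduct_two (h₁ : χ₁ ^ 2 = 1) (h₂ : χ₂ ^ 2 = 1) :
    1 ≤ (siegelProduct χ₁ χ₂ 2).re := by
  have hs : 1 < ((2 : ℝ) : ℂ).re := by simp
  have := one_le_re_LSeries_of_nonneg (siegelCoeff_nonneg h₁ h₂) (siegelCoeff_one χ₁ χ₂)
    (LSeriesHasSum_siegelCoeff hs).LSeriesSummable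
  rw [← siegelProduct_div_sub_one hs] at this
  norm_num at this
  exact this

theorem norm_LFunction_le_of_mem_closedBall {q : ℕ} [NeZero q] {χ : DirichletCharacter ℂ q}
    (hχ : χ ≠ 1) {s : ℂ} (hs : s ∈ closedBall (2 : ℂ) (3 / 2)) : ‖χ.LFunction s‖ ≤ 7 * q := by
  rw [mem_closedBall_iff_norm] at hs
  have hre : 1 / 2 ≤ s.re := by
    have := (abs_le.mp ((abs_re_le_norm (s - 2)).trans hs)).1
    rw [sub_re, re_ofNat] at this
    linarith
  have hnorm : ‖s‖ ≤ 7 / 2 := by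
    have := norm_le_norm_sub_add s 2
    rw [Complex.norm_ofNat] at this
    linarith
  calc ‖χ.LFunction s‖ ≤ ‖s‖ * ((q : ℝ) ^ (1 : ℝ) / (1 + s.re - 1)) :=
        norm_LFunction_le hχ zero_le_one le_rfl (by linarith)
    _ ≤ 7 / 2 * (q / (1 / 2)) := by
        rw [Real.rpow_one, add_sub_cancel_left]
        gcongr
    _ = 7 * q := by ring

theorem lcm_le_mul_real (m n : ℕ) [NeZero m] [NeZero n] : ((m.lcm n : ℕ) : ℝ) ≤ m * n :=
  mod_cast Nat.le_of_dvd (NeZero.pos (m * n)) (Nat.lcm_dvd_mul m n)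

theorem exists_norm_siegelProduct_le : ∃ K : ℝ, 1 ≤ K ∧ ∀ ⦃q₁ q₂ : ℕ⦄ [NeZero q₁] [NeZero q₂]
    ⦃χ₁ : DirichletCharacter ℂ q₁⦄ ⦃χ₂ : DirichletCharacter ℂ q₂⦄, χ₁ ≠ 1 → χ₂ ≠ 1 →
    χ₁.mul χ₂ ≠ 1 → ∀ s ∈ closedBall (2 : ℂ) (3 / 2),
      ‖siegelProduct χ₁ χ₂ s‖ ≤ K * (q₁ * q₂) ^ 2 := by
  obtain ⟨W, hW⟩ := (isCompact_closedBall (2 : ℂ) (3 / 2)).exists_bound_of_continuousOn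
    (differentiable_LFunctionTrivChar₁ 1).continuous.continuousOn
  refine ⟨max 1 (W * 7 ^ 3), le_max_left _ _, fun q₁ q₂ _ _ χ₁ χ₂ h₁ h₂ h s hs ↦ ?_⟩
  have hW₀ : 0 ≤ W := (norm_nonneg _).trans (hW s hs)
  rw [siegelProduct, norm_mul, norm_mul, norm_mul]
  calc _ ≤ W * (7 * q₁) * (7 * q₂) * (7 * (q₁ * q₂)) := by
        gcongr
        · exact hW s hs
        · exact norm_LFunction_le_of_mem_closedBall h₁ hs
        · exact norm_LFunction_le_of_mem_closedBall h₂ hs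
        · exact (norm_LFunction_le_of_mem_closedBall h hs).trans
            (by gcongr; exact lcm_le_mul_real _ _)
    _ = W * 7 ^ 3 * (q₁ * q₂) ^ 2 := by ring
    _ ≤ max 1 (W * 7 ^ 3) * (q₁ * q₂) ^ 2 := by gcongr; exact le_max_right _ _

theorem norm_dslope_one_le {P : ℂ → ℂ} {A : ℝ} (hA : ∀ s ∈ closedBall (2 : ℂ) (3 / 2), ‖P s‖ ≤ A)
    {s : ℂ} (hs : s ∈ sphere (2 : ℂ) (3 / 2)) : ‖dslope P 1 s‖ ≤ 4 * A := by
  have one_mem : (1 : ℂ) ∈ closedBall (2 : ℂ) (3 / 2) := by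
    rw [mem_closedBall_iff_norm]
    norm_num
  have le_norm_sub : 1 / 2 ≤ ‖s - 1‖ := by
    have := norm_sub_le_norm_sub_add_norm_sub s 1 2
    rw [mem_sphere_iff_norm.mp hs] at this
    norm_num at this
    linarith
  have hs₁ : s ≠ 1 := by rintro rfl; norm_num at le_norm_sub
  rw [dslope_of_ne _ hs₁, slope_def_field, norm_div]
  calc ‖P s - P 1‖ / ‖s - 1‖ ≤ (A + A) / (1 / 2) := by
        gcongr
        · linarith [(norm_nonneg _).trans (hA 1 one_mem)]
        · exact (norm_sub_le _ _).trans
            (add_le_add (hA s (sphere_subset_closedBall hs)) (hA 1 one_mem))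
    _ = 4 * A := by ring

theorem exists_one_sub_le_mul_norm_LFunction_one : ∃ C : ℝ, 0 < C ∧
    ∀ ⦃q₁ q₂ : ℕ⦄ [NeZero q₁] [NeZero q₂]
      ⦃χ₁ : DirichletCharacter ℂ q₁⦄ ⦃χ₂ : DirichletCharacter ℂ q₂⦄, χ₁ ≠ 1 → χ₂ ≠ 1 →
      χ₁.mul χ₂ ≠ 1 → χ₁ ^ 2 = 1 → χ₂ ^ 2 = 1 →
      ∀ β : ℝ, 7 / 8 ≤ β → β < 1 → χ₁.LFunction β = 0 →
        1 - β ≤ C * (‖χ₁.LFunction 1‖ * ‖χ₂.LFunction 1‖ * ‖(χ₁.mul χ₂).LFunction 1‖) *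
          (q₁ * q₂ : ℝ) ^ (8 * (1 - β)) := by
  obtain ⟨K, hK, norm_le⟩ := exists_norm_siegelProduct_le
  refine ⟨2 * Real.exp 1 * (32 * K), by positivity,
    fun q₁ q₂ _ _ χ₁ χ₂ h₁ h₂ h hsq₁ hsq₂ β hβ hβ₁ hzero ↦ ?_⟩
  have hQ : (1 : ℝ) ≤ q₁ * q₂ := mod_cast NeZero.one_le (n := q₁ * q₂)
  have estermann := one_sub_le_mul_rpow_of_zero (differentiable_siegelProduct h₁ h₂ h)
    (B := 4 * (K * (q₁ * q₂) ^ 2)) (by nlinarith [one_le_pow₀ hQ (n := 2)])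
    (fun s hs ↦ norm_dslope_one_le (norm_le h₁ h₂ h) hs)
    (iteratedDeriv_siegelProduct_alternating hsq₁ hsq₂) (one_le_re_siegelProduct_two hsq₁ hsq₂)
    hβ hβ₁ (by simp [siegelProduct, hzero])
  have rpow_le : (8 * (4 * (K * (q₁ * q₂ : ℝ) ^ 2))) ^ (4 * (1 - β)) ≤
      32 * K * (q₁ * q₂ : ℝ) ^ (8 * (1 - β)) := by
    calc _ = (32 * K) ^ (4 * (1 - β)) * (q₁ * q₂ : ℝ) ^ (8 * (1 - β)) := by
          rw [show 8 * (4 * (K * (q₁ * q₂ : ℝ) ^ 2)) = 32 * K * (q₁ * q₂ : ℝ) ^ 2 by ring,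
            Real.mul_rpow (by positivity) (by positivity), ← Real.rpow_natCast_mul (by positivity)]
          congr 2
          push_cast
          ring
      _ ≤ 32 * K * (q₁ * q₂ : ℝ) ^ (8 * (1 - β)) := by
          gcongr
          exact Real.rpow_le_self_of_one_le (by linarith) (by linarith)
  rw [siegelProduct_one, norm_mul, norm_mul] at estermann
  calc 1 - β ≤ _ := estermann
    _ ≤ 2 * Real.exp 1 * (‖χ₁.LFunction 1‖ * ‖χ₂.LFunction 1‖ * ‖(χ₁.mul χ₂).LFunction 1‖) *
        (32 * K * (q₁ * q₂ : ℝ) ^ (8 * (1 - β))) := by gcongr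
    _ = _ := by ring

end SiegelProduct

section Repulsion

theorem norm_LFunction_one_le {q : ℕ} [NeZero q] {χ : DirichletCharacter ℂ q} (hχ : χ ≠ 1) {a : ℝ}
    (ha₀ : 0 < a) (ha₁ : a ≤ 1) : ‖χ.LFunction 1‖ ≤ (q : ℝ) ^ a / a := by
  have := norm_LFunction_le hχ (s := 1) ha₀.le ha₁ (by rw [one_re]; linarith)
  rwa [norm_one, one_mul, one_re, add_sub_cancel_right] at this

theorem norm_LFunction_one_mul_le_of_zeros {q₁ q₂ : ℕ} [NeZero q₁] [NeZero q₂]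
    {χ₁ : DirichletCharacter ℂ q₁} {χ₂ : DirichletCharacter ℂ q₂} (h₁ : χ₁ ≠ 1) (h₂ : χ₂ ≠ 1)
    (h : χ₁.mul χ₂ ≠ 1) {δ : ℝ} (hδ₀ : 0 < δ) (hδ : δ ≤ 1 / 4) {β₁ β₂ : ℝ}
    (hβ₁ : β₁ ∈ Ico (1 - δ) 1) (hβ₂ : β₂ ∈ Ico (1 - δ) 1) (hzero₁ : χ₁.LFunction β₁ = 0)
    (hzero₂ : χ₂.LFunction β₂ = 0) :
    ‖χ₁.LFunction 1‖ * ‖χ₂.LFunction 1‖ * ‖(χ₁.mul χ₂).LFunction 1‖ ≤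
      (1 - β₁) * (1 - β₂) * ((q₁ * q₂ : ℝ) ^ (8 * δ) / (4 * δ ^ 5)) := by
  have hβ₁_pos : 0 < 1 - β₁ := sub_pos.mpr hβ₁.2
  have hβ₂_pos : 0 < 1 - β₂ := sub_pos.mpr hβ₂.2
  have hQ : (0 : ℝ) < q₁ * q₂ := mod_cast NeZero.pos (q₁ * q₂)
  calc ‖χ₁.LFunction 1‖ * ‖χ₂.LFunction 1‖ * ‖(χ₁.mul χ₂).LFunction 1‖
    _ ≤ ((q₁ : ℝ) ^ (4 * δ) / δ ^ 2 * (1 - β₁)) * ((q₂ : ℝ) ^ (4 * δ) / δ ^ 2 * (1 - β₂)) *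
        ((q₁ * q₂ : ℝ) ^ (4 * δ) / (4 * δ)) := by
        gcongr
        · exact norm_LFunction_one_le_of_zero h₁ hδ₀ hδ hβ₁.1 hβ₁.2 hzero₁
        · exact norm_LFunction_one_le_of_zero h₂ hδ₀ hδ hβ₂.1 hβ₂.2 hzero₂
        · exact (norm_LFunction_one_le h (a := 4 * δ) (by positivity) (by linarith)).trans
            (by gcongr; exact lcm_le_mul_real q₁ q₂)
    _ = (1 - β₁) * (1 - β₂) *
        ((q₁ * q₂ : ℝ) ^ (4 * δ) * (q₁ * q₂ : ℝ) ^ (4 * δ) / (4 * δ ^ 5)) := by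
        rw [Real.mul_rpow q₁.cast_nonneg q₂.cast_nonneg]
        field_simp
    _ = _ := by
        rw [← Real.rpow_add hQ]
        ring_nf

theorem exists_mul_rpow_le_one_sub_of_zeros {δ : ℝ} (hδ₀ : 0 < δ) (hδ : δ ≤ 1 / 8) :
    ∃ c : ℝ, 0 < c ∧ ∀ ⦃q₁ q₂ : ℕ⦄ [NeZero q₁] [NeZero q₂]
      ⦃χ₁ : DirichletCharacter ℂ q₁⦄ ⦃χ₂ : DirichletCharacter ℂ q₂⦄, χ₁ ≠ 1 → χ₂ ≠ 1 →
      χ₁.mul χ₂ ≠ 1 → χ₁ ^ 2 = 1 → χ₂ ^ 2 = 1 → ∀ β₁ ∈ Ico (1 - δ) 1, ∀ β₂ ∈ Ico (1 - δ) 1,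
        χ₁.LFunction β₁ = 0 → χ₂.LFunction β₂ = 0 →
          c * (q₁ * q₂ : ℝ) ^ (-(16 * δ)) ≤ 1 - β₂ := by
  obtain ⟨C, hC, one_sub_le⟩ := exists_one_sub_le_mul_norm_LFunction_one
  refine ⟨4 * δ ^ 5 / C, by positivity,
    fun q₁ q₂ _ _ χ₁ χ₂ h₁ h₂ h hsq₁ hsq₂ β₁ hβ₁ β₂ hβ₂ hzero₁ hzero₂ ↦ ?_⟩
  have hβ₁_pos : 0 < 1 - β₁ := sub_pos.mpr hβ₁.2
  have hβ₂_pos : 0 < 1 - β₂ := sub_pos.mpr hβ₂.2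
  have hQ : (1 : ℝ) ≤ q₁ * q₂ := mod_cast NeZero.one_le (n := q₁ * q₂)
  have norm_le :=
    norm_LFunction_one_mul_le_of_zeros h₁ h₂ h hδ₀ (by linarith) hβ₁ hβ₂ hzero₁ hzero₂
  have combined : (1 - β₁) * 1 ≤
      (1 - β₁) * (C * (1 - β₂) * (q₁ * q₂ : ℝ) ^ (16 * δ) / (4 * δ ^ 5)) := by
    calc (1 - β₁) * 1
      _ ≤ C * (‖χ₁.LFunction 1‖ * ‖χ₂.LFunction 1‖ * ‖(χ₁.mul χ₂).LFunction 1‖) *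
          (q₁ * q₂ : ℝ) ^ (8 * (1 - β₁)) := by
          rw [mul_one]
          exact one_sub_le h₁ h₂ h hsq₁ hsq₂ β₁ (by linarith [hβ₁.1]) hβ₁.2 hzero₁
      _ ≤ C * ((1 - β₁) * (1 - β₂) * ((q₁ * q₂ : ℝ) ^ (8 * δ) / (4 * δ ^ 5))) *
          (q₁ * q₂ : ℝ) ^ (8 * δ) := by
          gcongr
          linarith [hβ₁.1]
      _ = (1 - β₁) * (C * (1 - β₂) *
          ((q₁ * q₂ : ℝ) ^ (8 * δ) * (q₁ * q₂ : ℝ) ^ (8 * δ)) / (4 * δ ^ 5)) := by ring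
      _ = _ := by
          rw [← Real.rpow_add (by positivity)]
          ring_nf
  have one_le := le_of_mul_le_mul_left combined hβ₁_pos
  rw [le_div_iff₀ (by positivity), one_mul] at one_le
  rwa [Real.rpow_neg (by positivity), ← div_eq_mul_inv, div_div, div_le_iff₀' (by positivity),
    mul_right_comm]

end Repulsion

section ZeroFree

theorem lt_one_of_LFunction_eq_zero {q : ℕ} [NeZero q] {χ : DirichletCharacter ℂ q} (hχ : χ ≠ 1)
    {s : ℝ} (hzero : χ.LFunction s = 0) : s < 1 := by
  by_contra! hs
  exact LFunction_ne_zero_of_one_le_re χ (.inl hχ) (by simpa using hs) hzero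

theorem exists_LFunction_ne_zero_of_lt {q : ℕ} [NeZero q] {χ : DirichletCharacter ℂ q}
    (hχ : χ ≠ 1) : ∃ c : ℝ, 0 < c ∧ ∀ s : ℝ, 1 - c < s → χ.LFunction s ≠ 0 := by
  have hcont : ContinuousAt (fun s : ℝ ↦ χ.LFunction s) 1 :=
    ((differentiable_LFunction hχ).continuous.comp continuous_ofReal).continuousAt
  obtain ⟨c, hc, ne_zero⟩ := Metric.eventually_nhds_iff.mp
    (hcont.eventually_ne (by simpa using LFunction_apply_one_ne_zero hχ))
  refine ⟨c, hc, fun s hs hzero ↦ ne_zero ?_ hzero⟩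
  have := lt_one_of_LFunction_eq_zero hχ hzero
  rw [Real.dist_eq, abs_lt]
  constructor <;> linarith

theorem LFunction_eq_zero_of_changeLevel_eq_zero {m n : ℕ} [NeZero m] [NeZero n] (hmn : m ∣ n)
    {χ : DirichletCharacter ℂ m} (hχ : χ ≠ 1) {s : ℂ} (hs : 0 < s.re)
    (hzero : (changeLevel hmn χ).LFunction s = 0) : χ.LFunction s = 0 := by
  rw [LFunction_changeLevel hmn χ (.inl hχ)] at hzero
  refine (mul_eq_zero.mp hzero).resolve_right (Finset.prod_ne_zero_iff.mpr fun p hp heq ↦ ?_)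
  have hp : p.Prime := Nat.prime_of_mem_primeFactors hp
  have norm_lt : ‖χ p * (p : ℂ) ^ (-s)‖ < 1 := by
    rw [norm_mul, norm_natCast_cpow_of_pos hp.pos, neg_re]
    exact mul_lt_one_of_nonneg_of_lt_one_right (χ.norm_le_one _) (by positivity)
      (Real.rpow_lt_one_of_one_lt_of_neg (mod_cast hp.one_lt) (neg_neg_of_pos hs))
  rw [← sub_eq_zero.mp heq, norm_one] at norm_lt
  exact norm_lt.false

theorem LFunction_eq_zero_of_mul_eq_one {q₁ q₂ : ℕ} [NeZero q₁] [NeZero q₂]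
    {χ₁ : DirichletCharacter ℂ q₁} {χ₂ : DirichletCharacter ℂ q₂} (h₁ : χ₁ ≠ 1)
    (hsq : χ₂ ^ 2 = 1) (h : χ₁.mul χ₂ = 1) {s : ℂ} (hs : 0 < s.re) (hzero : χ₂.LFunction s = 0) :
    χ₁.LFunction s = 0 := by
  have changeLevel_eq : changeLevel (Nat.dvd_lcm_left q₁ q₂) χ₁ =
      changeLevel (Nat.dvd_lcm_right q₁ q₂) χ₂ := by
    have : changeLevel (Nat.dvd_lcm_right q₁ q₂) χ₂ * changeLevel (Nat.dvd_lcm_right q₁ q₂) χ₂ =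
        1 := by rw [← map_mul, ← pow_two, hsq, map_one]
    exact (eq_inv_of_mul_eq_one_left h).trans (eq_inv_of_mul_eq_one_left this).symm
  have h₂ : χ₂ ≠ 1 := by
    rwa [Ne, ← changeLevel_eq_one_iff (Nat.dvd_lcm_right q₁ q₂), ← changeLevel_eq,
      changeLevel_eq_one_iff]
  refine LFunction_eq_zero_of_changeLevel_eq_zero (Nat.dvd_lcm_left q₁ q₂) h₁ hs ?_
  rw [changeLevel_eq, LFunction_changeLevel _ _ (.inl h₂), hzero, zero_mul]

variable {δ : ℝ}

theorem exists_zero_free_of_zero {q₁ : ℕ} [NeZero q₁] {χ₁ : DirichletCharacter ℂ q₁} (h₁ : χ₁ ≠ 1)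
    (hsq₁ : χ₁ ^ 2 = 1) (hδ₀ : 0 < δ) (hδ : δ ≤ 1 / 8) {β : ℝ} (hβ : β ∈ Ico (1 - δ) 1)
    (hzero₁ : χ₁.LFunction β = 0) :
    ∃ C : ℝ, 0 < C ∧ ∀ (q : ℕ) [NeZero q] (χ : DirichletCharacter ℂ q), χ ≠ 1 → χ ^ 2 = 1 →
      ∀ s : ℝ, 1 - C * (q : ℝ) ^ (-(16 * δ)) < s → χ.LFunction s ≠ 0 := by
  obtain ⟨c, hc, repulsion⟩ := exists_mul_rpow_le_one_sub_of_zeros hδ₀ hδ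
  obtain ⟨c₁, hc₁, ne_zero⟩ := exists_LFunction_ne_zero_of_lt h₁
  have hq₁ : (0 : ℝ) < q₁ := mod_cast NeZero.pos q₁
  set C := min δ (min c₁ (c * (q₁ : ℝ) ^ (-(16 * δ))))
  have hC : 0 < C := by positivity
  have hCδ : C ≤ δ := min_le_left _ _
  have hCc₁ : C ≤ c₁ := (min_le_right _ _).trans (min_le_left _ _)
  have hCc : C ≤ c * (q₁ : ℝ) ^ (-(16 * δ)) := (min_le_right _ _).trans (min_le_right _ _)
  refine ⟨C, hC, fun q _ χ hχ hsq s hs hzero ↦ ?_⟩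
  have hq : (1 : ℝ) ≤ q := mod_cast NeZero.one_le (n := q)
  have hCs : 1 - C < s := by
    have := mul_le_of_le_one_right hC.le
      (Real.rpow_le_one_of_one_le_of_nonpos hq (by linarith : -(16 * δ) ≤ 0))
    linarith
  by_cases hmul : χ₁.mul χ = 1
  · refine ne_zero s (by linarith) (LFunction_eq_zero_of_mul_eq_one h₁ hsq hmul ?_ hzero)
    rw [ofReal_re]
    linarith
  · have := calc C * (q : ℝ) ^ (-(16 * δ))
      _ ≤ c * (q₁ : ℝ) ^ (-(16 * δ)) * (q : ℝ) ^ (-(16 * δ)) := by gcongr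
      _ = c * (q₁ * q : ℝ) ^ (-(16 * δ)) := by
          rw [Real.mul_rpow q₁.cast_nonneg q.cast_nonneg, mul_assoc]
      _ ≤ 1 - s := repulsion h₁ hχ hmul hsq₁ hsq β hβ s
          ⟨by linarith, lt_one_of_LFunction_eq_zero hχ hzero⟩ hzero₁ hzero
    linarith

theorem exists_zero_free (hδ₀ : 0 < δ) (hδ : δ ≤ 1 / 8) :
    ∃ C : ℝ, 0 < C ∧ ∀ (q : ℕ) [NeZero q] (χ : DirichletCharacter ℂ q), χ ≠ 1 → χ ^ 2 = 1 →
      ∀ s : ℝ, 1 - C * (q : ℝ) ^ (-(16 * δ)) < s → χ.LFunction s ≠ 0 := by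
  by_cases exceptional : ∃ (q₁ : ℕ) (_ : NeZero q₁) (χ₁ : DirichletCharacter ℂ q₁),
      χ₁ ≠ 1 ∧ χ₁ ^ 2 = 1 ∧ ∃ β ∈ Ico (1 - δ) 1, χ₁.LFunction β = 0
  · obtain ⟨q₁, _, χ₁, h₁, hsq₁, β, hβ, hzero₁⟩ := exceptional
    exact exists_zero_free_of_zero h₁ hsq₁ hδ₀ hδ hβ hzero₁
  · refine ⟨δ, hδ₀, fun q _ χ hχ hsq s hs hzero ↦ exceptional ⟨q, ‹_›, χ, hχ, hsq, s,
      ⟨?_, lt_one_of_LFunction_eq_zero hχ hzero⟩, hzero⟩⟩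
    have := mul_le_of_le_one_right hδ₀.le (Real.rpow_le_one_of_one_le_of_nonpos
      (mod_cast NeZero.one_le : (1 : ℝ) ≤ q) (by linarith : -(16 * δ) ≤ 0))
    linarith

end ZeroFree

end Siegel

theorem siegel_zero_free_general (ε : ℝ) (hε : 0 < ε) :
    ∃ C : ℝ, 0 < C ∧ ∀ (q : ℕ) [NeZero q] (χ : DirichletCharacter ℂ q), χ ≠ 1 → χ ^ 2 = 1 →
      ∀ s : ℝ, 1 - C * (q : ℝ) ^ (-ε) < s → χ.LFunction (s : ℂ) ≠ 0 := by
  have hδε : 16 * min (1 / 8) (ε / 16) ≤ ε := by linarith [min_le_right (1 / 8) (ε / 16)]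
  obtain ⟨C, hC, zero_free⟩ := Siegel.exists_zero_free (δ := min (1 / 8) (ε / 16))
    (by positivity) (min_le_left _ _)
  refine ⟨C, hC, fun q _ χ hχ hsq s hs ↦ zero_free q χ hχ hsq s (lt_of_le_of_lt ?_ hs)⟩
  gcongr
  exact mod_cast NeZero.one_le

/-- **Siegel's theorem, zero-free region form.** For every `ε > 0` there is `C(ε) > 0`
such that for every integer `q > 1` and every primitive quadratic Dirichlet character
`χ` mod `q`, the function `L(s,χ)` has no real zero `s` with `s > 1 - C(ε) * q ^ (-ε)`. -/
theorem siegel_zero_free (ε : ℝ) (hε : 0 < ε) :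
    ∃ C : ℝ, 0 < C ∧
      ∀ (q : ℕ) (hq : 1 < q),
        haveI : NeZero q := ⟨by omega⟩
        ∀ χ : DirichletCharacter ℂ q,
          χ.IsPrimitive → χ ≠ 1 → χ ^ 2 = 1 →
            ∀ s : ℝ, 1 - C * (q : ℝ) ^ (-ε) < s → χ.LFunction (s : ℂ) ≠ 0 := by
  obtain ⟨C, hC, zero_free⟩ := siegel_zero_free_general ε hε
  exact ⟨C, hC, fun q hq χ _ ↦ haveI : NeZero q := ⟨by omega⟩; zero_free q χ⟩
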